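/- arXiv:1606.00099 — 2 statements merged into one kernel-verified Lean document; each statement's English description precedes it below -/
import Mathlib

section
/- Let γ ≥ 0 and let f be a normalized close-to-convex function on U. Then the function F(z) = ((1+γ)/z^γ) ∫_0^z t^{γ-1} f(t) dt is also close-to-convex on U. -/
open Complex MeasureTheory

noncomputable section

def unitDisk : Set ℂ := Metric.ball 0 1

def Normalized (f : ℂ → ℂ) : Prop := f 0 = 0 ∧ deriv f 0 = 1

def StarlikeOfOrder (a : ℝ) (g : ℂ → ℂ) : Prop :=
  ∀ z ∈ unitDisk, z ≠ 0 → a < (z * deriv g z / g z).re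

def Starlike (g : ℂ → ℂ) : Prop := StarlikeOfOrder 0 g

def CloseToConvex (f : ℂ → ℂ) : Prop :=
  AnalyticOn ℂ f unitDisk ∧ Normalized f ∧
  ∃ g : ℂ → ℂ, AnalyticOn ℂ g unitDisk ∧ Normalized g ∧ Set.InjOn g unitDisk ∧
    Starlike g ∧ ∀ z ∈ unitDisk, z ≠ 0 → 0 < (z * deriv f z / g z).re

def Subordinate (f g : ℂ → ℂ) : Prop :=
  ∃ w : ℂ → ℂ, AnalyticOn ℂ w unitDisk ∧ w 0 = 0 ∧
    (∀ z ∈ unitDisk, w z ∈ unitDisk) ∧ ∀ z ∈ unitDisk, f z = g (w z)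

def eps (k : ℕ) : ℂ := Complex.exp (2 * Real.pi * Complex.I / k)

def gk (k : ℕ) (g : ℂ → ℂ) (z : ℂ) : ℂ :=
  ∏ v ∈ Finset.range k, (eps k) ^ (-(v : ℤ)) * g ((eps k) ^ v * z)

def Ks (k : ℕ) (l m : ℝ) (φ : ℂ → ℂ) (f : ℂ → ℂ) : Prop :=
  ∃ g : ℂ → ℂ, AnalyticOn ℂ g unitDisk ∧ Normalized g ∧
    StarlikeOfOrder ((k - 1 : ℝ) / k) g ∧
    Subordinate (fun z => (z ^ k * deriv f z
      + z ^ (k + 1) * iteratedDeriv 2 f z * ((l : ℂ) - m + 2 * l * m)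
      + (l : ℂ) * m * z ^ (k + 2) * iteratedDeriv 3 f z) / gk k g z) φ


lemma deriv_nonneg_of_right {φ : ℝ → ℝ} {d : ℝ} (h : HasDerivAt φ d 0) (h0 : φ 0 = 0)
    (hp : ∀ t, 0 < t → 0 ≤ φ t) : 0 ≤ d := by
  have := h.tendsto_slope_zero_right
  refine ge_of_tendsto this ?_
  filter_upwards [self_mem_nhdsWithin] with t ht
  have ht' : (0:ℝ) < t := ht
  have := hp t ht'
  simp only [zero_add, h0, sub_zero, smul_eq_mul]
  positivity

lemma first_bad (v : ℂ → ℂ) (A B : ℝ) (hv : DifferentiableOn ℂ v unitDisk)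
    (h0 : 0 < A * (v 0).re - B * normSq (v 0))
    (hbad : ∃ z ∈ unitDisk, A * (v z).re - B * normSq (v z) ≤ 0) :
    ∃ z ∈ unitDisk, z ≠ 0 ∧ A * (v z).re - B * normSq (v z) = 0 ∧
      ∃ l : ℝ, l ≤ 0 ∧ ((A : ℂ) - 2 * B * (starRingEnd ℂ) (v z)) * (z * deriv v z) = l := by
  obtain ⟨z1, hz1, hb1⟩ := hbad
  set E : ℂ → ℝ := fun z => A * (v z).re - B * normSq (v z) with hE
  have hsub : Metric.closedBall (0:ℂ) ‖z1‖ ⊆ unitDisk := by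
    apply Metric.closedBall_subset_ball
    simpa [unitDisk] using hz1
  have hEc : ContinuousOn E unitDisk := by
    have hvc := hv.continuousOn
    have h1 : ContinuousOn (fun z => (v z).re) unitDisk := continuous_re.comp_continuousOn hvc
    have h2 : ContinuousOn (fun z => normSq (v z)) unitDisk :=
      continuous_normSq.comp_continuousOn hvc
    exact (continuousOn_const.mul h1).sub (continuousOn_const.mul h2)
  have hEcl := hEc.mono hsub
  have hcl : IsClosed (Metric.closedBall (0:ℂ) ‖z1‖ ∩ E ⁻¹' Set.Iic 0) :=
    hEcl.preimage_isClosed_of_isClosed Metric.isClosed_closedBall isClosed_Iic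
  have hcomp : IsCompact (Metric.closedBall (0:ℂ) ‖z1‖ ∩ E ⁻¹' Set.Iic 0) :=
    (isCompact_closedBall (0:ℂ) ‖z1‖).of_isClosed_subset hcl Set.inter_subset_left
  obtain ⟨z0, ⟨hz0, hz0b⟩, hmin⟩ := hcomp.exists_isMinOn ⟨z1, by simp, hb1⟩ continuous_norm.continuousOn
  have hz0D := hsub hz0
  have hz0b' : E z0 ≤ 0 := hz0b
  have hz0n : ‖z0‖ ≤ ‖z1‖ := by simpa using hz0
  have hne : z0 ≠ 0 := by
    rintro rfl
    exact absurd h0 (not_lt.mpr hz0b')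
  have hpos : ∀ z, ‖z‖ < ‖z0‖ → 0 < E z := by
    intro z hz
    by_contra hcon
    have := hmin (a := z) ⟨by simpa using (hz.le.trans hz0n), not_lt.mp hcon⟩
    exact absurd hz (not_lt.mpr this)
  have hnn : ∀ z, ‖z‖ ≤ ‖z0‖ → 0 ≤ E z := by
    have hc : closure (Metric.ball (0:ℂ) ‖z0‖) = Metric.closedBall 0 ‖z0‖ :=
      closure_ball _ (by simpa using hne)
    have hs2 : Metric.closedBall (0:ℂ) ‖z0‖ ⊆ unitDisk :=
      (Metric.closedBall_subset_closedBall hz0n).trans hsub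
    intro z hz
    have hzc : z ∈ closure (Metric.ball (0:ℂ) ‖z0‖) := by rw [hc]; simpa using hz
    have := (hEc.mono hs2) z (by simpa using hz)
    have h3 := this.mono (Metric.ball_subset_closedBall)
    have := h3.mem_closure_image hzc
    have h4 : closure (E '' Metric.ball 0 ‖z0‖) ⊆ Set.Ici 0 := by
      apply closure_minimal _ isClosed_Ici
      rintro _ ⟨y, hy, rfl⟩
      exact (hpos y (by simpa using hy)).le
    exact h4 this
  have hE0 : E z0 = 0 := le_antisymm hz0b' (hnn z0 le_rfl)
  have hvd : HasDerivAt v (deriv v z0) z0 :=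
    (hv.differentiableAt (Metric.isOpen_ball.mem_nhds hz0D)).hasDerivAt
  set W := ((A : ℂ) - 2 * B * (starRingEnd ℂ) (v z0)) * (z0 * deriv v z0) with hW
  have key : ∀ c : ℂ, c.re ≤ 0 → 0 ≤ (W * c).re := by
    intro c hc
    have hpath : HasDerivAt (fun t : ℝ => z0 * cexp (t * c)) (z0 * c) 0 := by
      have h1 : HasDerivAt (fun t : ℂ => z0 * cexp (t * c)) (z0 * (cexp (0 * c) * (1 * c))) ((0:ℝ):ℂ) := by
        have := (((hasDerivAt_id (0:ℂ)).mul_const c).cexp).const_mul z0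
        simpa using this
      simpa using h1.comp_ofReal
    have hcomp : HasDerivAt (fun t : ℝ => v (z0 * cexp (t * c))) (deriv v z0 * (z0 * c)) 0 := by
      have hvd' : HasDerivAt v (deriv v z0) ((fun t : ℝ => z0 * cexp (t * c)) 0) := by simpa using hvd
      exact hvd'.comp (0:ℝ) hpath
    set d := deriv v z0 * (z0 * c) with hd
    have hre : HasDerivAt (fun t : ℝ => (v (z0 * cexp (t * c))).re) d.re 0 :=
      (reCLM.hasFDerivAt.comp_hasDerivAt (0:ℝ) hcomp)
    have him : HasDerivAt (fun t : ℝ => (v (z0 * cexp (t * c))).im) d.im 0 :=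
      (imCLM.hasFDerivAt.comp_hasDerivAt (0:ℝ) hcomp)
    have hall := (hre.const_mul A).sub (((hre.mul hre).add (him.mul him)).const_mul B)
    have := deriv_nonneg_of_right hall (by
      simp [← normSq_apply]; exact hE0) (by
      intro t ht
      have := hnn (z0 * cexp (t * c)) (by
        rw [norm_mul, norm_exp]
        have : Real.exp ((t * c : ℂ)).re ≤ 1 := by
          rw [Real.exp_le_one_iff]; simp; nlinarith
        nlinarith [norm_nonneg z0])
      simpa [hE, normSq_apply] using this)
    have e : (W * c).re = A * d.re - B * (d.re * (v z0).re + (v z0).re * d.re + (d.im * (v z0).im + (v z0).im * d.im)) := by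
      have : W * c = ((A : ℂ) - 2 * B * (starRingEnd ℂ) (v z0)) * d := by rw [hW, hd]; ring
      rw [this]
      simp
      ring
    rw [e]
    simpa using this
  refine ⟨z0, hz0D, hne, hE0, W.re, ?_, ?_⟩
  · have := key (-1) (by simp)
    simp at this; exact this
  · have h1 := key I (by simp)
    have h2 := key (-I) (by simp)
    simp at h1 h2
    have h3 : W.im = 0 := le_antisymm h1 h2
    exact Complex.ext (by rw [ofReal_re]) (by rw [ofReal_im, h3])

lemma shrink (G : ℂ → ℂ) (hG : DifferentiableOn ℂ G unitDisk) (a : ℂ) (ha : a ∈ unitDisk)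
    (hs : 0 < (a * deriv G a / G a).re) :
    ∃ ψ : ℂ → ℂ, ψ (G a) = a ∧ Filter.Tendsto ψ (nhds (G a)) (nhds a) ∧ (∀ᶠ y in nhds (G a), G (ψ y) = y) ∧
     ∀ᶠ t : ℝ in nhdsWithin 0 (Set.Ioi 0), ‖ψ ((1 - t) * G a)‖ < ‖a‖ := by
  have hGa : G a ≠ 0 := by intro h; simp [h] at hs
  have hd : deriv G a ≠ 0 := by intro h; simp [h] at hs
  have ha0 : a ≠ 0 := by intro h; simp [h] at hs
  have han : AnalyticAt ℂ G a := hG.analyticAt (Metric.isOpen_ball.mem_nhds ha)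
  have hst : HasStrictDerivAt G (deriv G a) a := han.hasStrictDerivAt
  have hinv := hst.to_localInverse hd
  set ψ := hst.localInverse G (deriv G a) a hd with hψ
  have hψa : ψ (G a) = a := (hst.hasStrictFDerivAt_equiv hd).localInverse_apply_image
  refine ⟨ψ, hψa, ?_, ?_, ?_⟩
  · have := hinv.hasDerivAt.continuousAt.tendsto
    rwa [hψa] at this
  · exact (hst.hasStrictFDerivAt_equiv hd).eventually_right_inverse
  · have hpath : HasDerivAt (fun t : ℝ => (1 - t) * G a) (-G a) 0 := by
      have h1 : HasDerivAt (fun t : ℂ => (1 - t) * G a) (-1 * G a) ((0:ℝ):ℂ) :=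
        ((hasDerivAt_id _).const_sub 1).mul_const _
      simpa using h1.comp_ofReal
    have hc : HasDerivAt (fun t : ℝ => ψ ((1 - t) * G a)) ((deriv G a)⁻¹ * (-G a)) 0 := by
      have h' : HasDerivAt ψ (deriv G a)⁻¹ ((fun t : ℝ => (1 - t) * G a) 0) := by
        simpa using hinv.hasDerivAt
      exact h'.comp (0:ℝ) hpath
    set d := (deriv G a)⁻¹ * (-G a) with hdd
    have hre : HasDerivAt (fun t : ℝ => (ψ ((1 - t) * G a)).re) d.re 0 :=
      (reCLM.hasFDerivAt.comp_hasDerivAt (0:ℝ) hc)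
    have him : HasDerivAt (fun t : ℝ => (ψ ((1 - t) * G a)).im) d.im 0 :=
      (imCLM.hasFDerivAt.comp_hasDerivAt (0:ℝ) hc)
    have hall := (hre.mul hre).add (him.mul him)
    have hneg : d.re * a.re + a.re * d.re + (d.im * a.im + a.im * d.im) < 0 := by
      set P := a * deriv G a / G a with hP
      have hP0 : P ≠ 0 := by intro h; simp [h] at hs
      have e : d = - (a * P⁻¹) := by rw [hdd, hP]; field_simp
      have e2 : d.re * a.re + a.re * d.re + (d.im * a.im + a.im * d.im) = - (2 * normSq a * (P.re / normSq P)) := by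
        rw [e, normSq_apply a]; simp; ring
      rw [e2]
      have := normSq_pos.mpr hP0
      have := normSq_pos.mpr ha0
      have : 0 < (2 * normSq a * (P.re / normSq P)) := by positivity
      linarith
    have hlim := hall.tendsto_slope_zero_right
    have := (hlim.eventually_lt_const (u := 0) (by simpa [hψa] using hneg))
    filter_upwards [this, self_mem_nhdsWithin] with t ht htp
    have htp' : (0:ℝ) < t := htp
    simp only [zero_add, smul_eq_mul] at ht
    have h2 := (pos_iff_neg_of_mul_neg ht).1 (inv_pos.mpr htp')
    simp [hψa] at h2
    rw [← sq_lt_sq₀ (norm_nonneg _) (norm_nonneg _), ← normSq_eq_norm_sq, ← normSq_eq_norm_sq,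
      normSq_apply, normSq_apply]
    linarith

lemma starlike_inj (G : ℂ → ℂ) (hG : DifferentiableOn ℂ G unitDisk) (h0 : G 0 = 0)
    (h1 : deriv G 0 = 1) (hs : ∀ z ∈ unitDisk, z ≠ 0 → 0 < (z * deriv G z / G z).re) :
    Set.InjOn G unitDisk := by
  have hGne : ∀ z ∈ unitDisk, z ≠ 0 → G z ≠ 0 := by
    intro z hz hz0 h; have := hs z hz hz0; simp [h] at this
  have hdne : ∀ z ∈ unitDisk, deriv G z ≠ 0 := by
    intro z hz h
    by_cases hz0 : z = 0
    · subst hz0; simp [h1] at h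
    · have := hs z hz hz0; simp [h] at this
  have hloc : ∀ z ∈ unitDisk, ∃ U : Set ℂ, IsOpen U ∧ z ∈ U ∧ Set.InjOn G U := by
    intro z hz
    have han : AnalyticAt ℂ G z := hG.analyticAt (Metric.isOpen_ball.mem_nhds hz)
    have hst : HasStrictDerivAt G (deriv G z) z := han.hasStrictDerivAt
    have h := (hst.hasStrictFDerivAt_equiv (hdne z hz))
    refine ⟨(h.toOpenPartialHomeomorph G).source, (h.toOpenPartialHomeomorph G).open_source,
      h.mem_toOpenPartialHomeomorph_source, (h.toOpenPartialHomeomorph G).injOn⟩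
  intro a ha b hb hab
  by_contra hne
  set r := max ‖a‖ ‖b‖ with hr
  have hr1 : r < 1 := max_lt (by simpa [unitDisk] using ha) (by simpa [unitDisk] using hb)
  have hsub : Metric.closedBall (0:ℂ) r ⊆ unitDisk := Metric.closedBall_subset_ball hr1
  set B : Set (ℂ × ℂ) := {p | p ∈ Metric.closedBall (0:ℂ) r ×ˢ Metric.closedBall (0:ℂ) r ∧
    G p.1 = G p.2 ∧ p.1 ≠ p.2} with hB
  choose! U hUo hUm hUi using hloc
  have hBeq : B = ((Metric.closedBall (0:ℂ) r ×ˢ Metric.closedBall (0:ℂ) r) ∩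
      (fun p : ℂ × ℂ => G p.1 - G p.2) ⁻¹' {0}) \ ⋃ z ∈ unitDisk, U z ×ˢ U z := by
    ext ⟨x, y⟩
    constructor
    · rintro ⟨h1, h2, h3⟩
      refine ⟨⟨h1, by simpa [sub_eq_zero] using h2⟩, ?_⟩
      intro hmem
      simp only [Set.mem_iUnion] at hmem
      obtain ⟨z, hz, hx, hy⟩ := hmem
      exact h3 (hUi z hz hx hy h2)
    · rintro ⟨⟨h1, h2⟩, h3⟩
      refine ⟨h1, by simpa [sub_eq_zero] using h2, ?_⟩
      intro hxy
      simp only at hxy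
      subst hxy
      apply h3
      simp only [Set.mem_iUnion]
      exact ⟨x, hsub h1.1, hUm x (hsub h1.1), hUm x (hsub h1.1)⟩
  have hGc : ContinuousOn G (Metric.closedBall (0:ℂ) r) := hG.continuousOn.mono hsub
  have hcomp : IsCompact B := by
    rw [hBeq]
    apply IsCompact.diff
    · refine ((isCompact_closedBall (0:ℂ) r).prod (isCompact_closedBall (0:ℂ) r)).of_isClosed_subset ?_ Set.inter_subset_left
      refine ContinuousOn.preimage_isClosed_of_isClosed ?_ (Metric.isClosed_closedBall.prod Metric.isClosed_closedBall) isClosed_singleton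
      exact (hGc.comp continuousOn_fst (fun p hp => hp.1)).sub (hGc.comp continuousOn_snd (fun p hp => hp.2))
    · exact isOpen_biUnion fun z hz => (hUo z hz).prod (hUo z hz)
  have hBne : B.Nonempty := ⟨(a, b), ⟨by simp [hr], by simp [hr]⟩, hab, hne⟩
  obtain ⟨⟨x, y⟩, ⟨⟨hx, hy⟩, hxy, hxyne⟩, hmin⟩ := hcomp.exists_isMinOn hBne
    (f := fun p : ℂ × ℂ => max ‖p.1‖ ‖p.2‖) (by fun_prop)
  simp only at hx hy hxy hxyne
  have hxD := hsub hx
  have hyD := hsub hy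
  have hx0 : x ≠ 0 := by
    rintro rfl
    rw [h0] at hxy
    exact hGne y hyD (fun h => hxyne h.symm) hxy.symm
  have hy0 : y ≠ 0 := by
    rintro rfl
    rw [h0] at hxy
    exact hGne x hxD hxyne hxy
  obtain ⟨ψ, hψ1, hψ2, hψ3, hψ4⟩ := shrink G hG x hxD (hs x hxD hx0)
  obtain ⟨χ, hχ1, hχ2, hχ3, hχ4⟩ := shrink G hG y hyD (hs y hyD hy0)
  rw [← hxy] at hχ1 hχ2 hχ3 hχ4
  have hpath : Filter.Tendsto (fun t : ℝ => (1 - (t:ℂ)) * G x) (nhdsWithin 0 (Set.Ioi 0)) (nhds (G x)) := by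
    have : Continuous (fun t : ℝ => (1 - (t:ℂ)) * G x) := by fun_prop
    have := this.tendsto 0
    simp only [ofReal_zero, sub_zero, one_mul] at this
    exact this.mono_left nhdsWithin_le_nhds
  have hneq : ∀ᶠ t : ℝ in nhdsWithin 0 (Set.Ioi 0), ψ ((1 - t) * G x) ≠ χ ((1 - t) * G x) :=
    by
    have h5 := ((hψ2.comp hpath).sub (hχ2.comp hpath)).eventually_ne (sub_ne_zero.mpr hxyne)
    filter_upwards [h5] with t ht
    exact sub_ne_zero.mp ht
  obtain ⟨t, e1, e2, e3, e4, e5⟩ := (hneq.and (hψ4.and (hχ4.and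
    ((hpath.eventually hψ3).and (hpath.eventually hχ3))))).exists
  have hx' : ‖x‖ ≤ r := by simpa using hx
  have hy' : ‖y‖ ≤ r := by simpa using hy
  have hmem : (ψ ((1 - t) * G x), χ ((1 - t) * G x)) ∈ B :=
    ⟨⟨by simpa using e2.le.trans hx', by simpa using e3.le.trans hy'⟩, by
      simp only; rw [e4, e5], e1⟩
  have := hmin hmem
  exact absurd (max_lt_max e2 e3) (not_lt.mpr this)

def JJ (γ : ℝ) (φ : ℂ → ℂ) (z : ℂ) : ℂ := ∫ s in (0:ℝ)..1, ((s ^ γ : ℝ) : ℂ) * φ (s * z)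

lemma mem_disk_mul {s : ℝ} (h0 : 0 ≤ s) (h1 : s ≤ 1) {z : ℂ} {r : ℝ} (hz : ‖z‖ ≤ r) :
    ‖(s:ℂ) * z‖ ≤ r := by
  rw [norm_mul, norm_real, Real.norm_of_nonneg h0]
  nlinarith [norm_nonneg z]

lemma JJ_cont (γ : ℝ) (hγ : 0 ≤ γ) (φ : ℂ → ℂ) (hφ : ContinuousOn φ unitDisk) (z : ℂ) (hz : z ∈ unitDisk) :
    ContinuousOn (fun s : ℝ => ((s ^ γ : ℝ) : ℂ) * φ (s * z)) (Set.Icc 0 1) := by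
  have h1 : Continuous (fun s : ℝ => ((s ^ γ : ℝ) : ℂ)) :=
    continuous_ofReal.comp (Real.continuous_rpow_const hγ)
  refine h1.continuousOn.mul (hφ.comp (by fun_prop) ?_)
  intro s hs
  have hz' : ‖z‖ < 1 := by simpa [unitDisk] using hz
  have := mem_disk_mul hs.1 hs.2 (le_refl ‖z‖)
  simp only [unitDisk, Metric.mem_ball, dist_zero_right]
  linarith

lemma JJ_deriv (γ : ℝ) (hγ : 0 ≤ γ) (φ : ℂ → ℂ) (hφ : DifferentiableOn ℂ φ unitDisk) (z : ℂ)
    (hz : z ∈ unitDisk) :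
    HasDerivAt (JJ γ φ) (JJ (γ + 1) (deriv φ) z) z := by
  have hz' : ‖z‖ < 1 := by simpa [unitDisk] using hz
  obtain ⟨r, hr, hr1⟩ := exists_between hz'
  have hsub : Metric.closedBall (0:ℂ) r ⊆ unitDisk := Metric.closedBall_subset_ball hr1
  have hφ' : DifferentiableOn ℂ (deriv φ) unitDisk := hφ.deriv Metric.isOpen_ball
  obtain ⟨C, hC⟩ := (isCompact_closedBall (0:ℂ) r).exists_bound_of_continuousOn
    (hφ'.continuousOn.mono hsub)
  have hIoc : Set.uIoc (0:ℝ) 1 = Set.Ioc 0 1 := Set.uIoc_of_le zero_le_one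
  have hint : ∀ x ∈ unitDisk, IntervalIntegrable (fun s : ℝ => ((s ^ γ : ℝ) : ℂ) * φ (s * x)) volume 0 1 := by
    intro x hx
    apply ContinuousOn.intervalIntegrable
    rw [Set.uIcc_of_le zero_le_one]
    exact JJ_cont γ hγ φ hφ.continuousOn x hx
  have hint' : IntervalIntegrable (fun s : ℝ => ((s ^ (γ+1) : ℝ) : ℂ) * deriv φ (s * z)) volume 0 1 := by
    apply ContinuousOn.intervalIntegrable
    rw [Set.uIcc_of_le zero_le_one]
    exact JJ_cont (γ+1) (by linarith) _ hφ'.continuousOn z hz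
  have hball : Metric.ball (0:ℂ) r ∈ nhds z := Metric.isOpen_ball.mem_nhds (by simpa using hr)
  have := intervalIntegral.hasDerivAt_integral_of_dominated_loc_of_deriv_le
    (F := fun x (s:ℝ) => ((s ^ γ : ℝ) : ℂ) * φ (s * x))
    (F' := fun x (s:ℝ) => ((s ^ (γ+1) : ℝ) : ℂ) * deriv φ (s * x))
    (x₀ := z) (s := Metric.ball (0:ℂ) r) (μ := volume) (a := 0) (b := 1) (bound := fun _ => C) hball
    (by
      filter_upwards [hball] with x hx
      have := (hint x (hsub (Metric.ball_subset_closedBall hx)))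
      rw [intervalIntegrable_iff] at this
      exact this.aestronglyMeasurable)
    (hint z hz)
    (by
      rw [intervalIntegrable_iff] at hint'
      exact hint'.aestronglyMeasurable)
    (by
      refine Filter.Eventually.of_forall ?_
      intro s hs x hx
      rw [hIoc] at hs
      have hx' : ‖x‖ ≤ r := by
        have : ‖x‖ < r := by simpa using hx
        exact this.le
      have h1 := hC (s * x) (by simpa using mem_disk_mul hs.1.le hs.2 hx')
      rw [norm_mul, norm_real, Real.norm_of_nonneg (Real.rpow_nonneg hs.1.le _)]
      have h2 := Real.rpow_le_one hs.1.le hs.2 (by linarith : 0 ≤ γ + 1)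
      have h3 := Real.rpow_nonneg hs.1.le (γ+1)
      nlinarith [norm_nonneg (deriv φ (s * x))])
    (by simp)
    (by
      refine Filter.Eventually.of_forall ?_
      intro s hs x hx
      rw [hIoc] at hs
      have hx' : ‖x‖ ≤ r := by
        have : ‖x‖ < r := by simpa using hx
        exact this.le
      have hm : (s:ℂ) * x ∈ unitDisk := hsub (by simpa using mem_disk_mul hs.1.le hs.2 hx')
      have hd := (hφ.differentiableAt (Metric.isOpen_ball.mem_nhds hm)).hasDerivAt
      have hp : HasDerivAt (fun x : ℂ => (s:ℂ) * x) s x := by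
        simpa using (hasDerivAt_id x).const_mul (s:ℂ)
      have := (hd.comp x hp).const_mul ((s ^ γ : ℝ) : ℂ)
      refine HasDerivAt.congr_deriv this ?_
      rw [Real.rpow_add hs.1, Real.rpow_one]; push_cast; ring)
  exact this.2

lemma JJ_ode (γ : ℝ) (hγ : 0 ≤ γ) (φ : ℂ → ℂ) (hφ : DifferentiableOn ℂ φ unitDisk) (z : ℂ)
    (hz : z ∈ unitDisk) :
    z * JJ (γ + 1) (deriv φ) z + (γ + 1) * JJ γ φ z = φ z := by
  have hφ' : DifferentiableOn ℂ (deriv φ) unitDisk := hφ.deriv Metric.isOpen_ball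
  have hz' : ‖z‖ < 1 := by simpa [unitDisk] using hz
  have c1 := JJ_cont γ hγ φ hφ.continuousOn z hz
  have c2 := JJ_cont (γ+1) (by linarith) _ hφ'.continuousOn z hz
  have c3 := JJ_cont (γ+1) (by linarith) _ hφ.continuousOn z hz
  rw [← Set.uIcc_of_le zero_le_one] at c1 c2
  have i1 := (c1.intervalIntegrable (μ := volume)).const_mul ((γ:ℂ) + 1)
  have i2 := (c2.intervalIntegrable (μ := volume)).const_mul z
  have := intervalIntegral.integral_eq_sub_of_hasDerivAt_of_le zero_le_one c3 
    (f' := fun s : ℝ => z * (((s ^ (γ+1) : ℝ) : ℂ) * deriv φ (s * z)) + (γ + 1) * (((s ^ γ : ℝ) : ℂ) * φ (s * z)))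
    (by
      intro s hs
      have hm : (s:ℂ) * z ∈ unitDisk := by
        have := mem_disk_mul hs.1.le hs.2.le le_rfl (z := z)
        simp only [unitDisk, Metric.mem_ball, dist_zero_right]; linarith
      have hd := (hφ.differentiableAt (Metric.isOpen_ball.mem_nhds hm)).hasDerivAt
      have hp : HasDerivAt (fun x : ℂ => x * z) z (s:ℂ) := by
        simpa using (hasDerivAt_id (s:ℂ)).mul_const z
      have h1 := (HasDerivAt.comp (s:ℂ) hd hp).comp_ofReal
      have h2 := (Real.hasDerivAt_rpow_const (x := s) (p := γ + 1) (Or.inl hs.1.ne')).ofReal_comp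
      have := h2.mul h1
      refine HasDerivAt.congr_deriv this ?_
      simp
      ring)
    (i2.add i1)
  rw [intervalIntegral.integral_add i2 i1, intervalIntegral.integral_const_mul,
    intervalIntegral.integral_const_mul] at this
  simp only [JJ]
  rw [this]
  simp [Real.zero_rpow (by linarith : γ + 1 ≠ 0)]

lemma factor (f : ℂ → ℂ) (hf : DifferentiableOn ℂ f unitDisk) (h0 : f 0 = 0) (h1 : deriv f 0 = 1) :
    ∃ φ : ℂ → ℂ, DifferentiableOn ℂ φ unitDisk ∧ φ 0 = 1 ∧ (∀ z, f z = z * φ z) ∧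
      ∀ z ∈ unitDisk, deriv f z = φ z + z * deriv φ z := by
  have hd : DifferentiableOn ℂ (dslope f 0) unitDisk :=
    (Complex.differentiableOn_dslope (Metric.isOpen_ball.mem_nhds (by simp))).2 hf
  have he : ∀ z, f z = z * dslope f 0 z := by
    intro z
    have := sub_smul_dslope f 0 z
    simp [h0] at this
    exact this.symm
  refine ⟨dslope f 0, hd, by simp [h1], he, ?_⟩
  intro z hz
  have h2 := (hd.differentiableAt (Metric.isOpen_ball.mem_nhds hz)).hasDerivAt
  have h3 := (hasDerivAt_id z).mul h2
  have h4 : f = fun z => z * dslope f 0 z := funext he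
  have h5 : HasDerivAt f (1 * dslope f 0 z + z * deriv (dslope f 0) z) z := by
    refine HasDerivAt.congr_of_eventuallyEq h3 (Filter.Eventually.of_forall ?_)
    intro x
    simpa using he x
  rw [h5.deriv, one_mul]

lemma JJ_diff (γ : ℝ) (hγ : 0 ≤ γ) (φ : ℂ → ℂ) (hφ : DifferentiableOn ℂ φ unitDisk) :
    DifferentiableOn ℂ (JJ γ φ) unitDisk := fun z hz =>
  (JJ_deriv γ hγ φ hφ z hz).differentiableAt.differentiableWithinAt

lemma zero_mem_disk : (0:ℂ) ∈ unitDisk := by simp [unitDisk]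

lemma JJ_zero (γ : ℝ) (hγ : 0 ≤ γ) (φ : ℂ → ℂ) (hφ : DifferentiableOn ℂ φ unitDisk) (h : φ 0 = 1) :
    (1 + γ) * JJ γ φ 0 = 1 := by
  have := JJ_ode γ hγ φ hφ 0 zero_mem_disk
  rw [h] at this
  linear_combination this

lemma core1 (γ : ℝ) (hγ : 0 ≤ γ) (χ : ℂ → ℂ) (hχ : DifferentiableOn ℂ χ unitDisk) (h1 : χ 0 = 1)
    (hne : ∀ z ∈ unitDisk, χ z ≠ 0)
    (hq : ∀ z ∈ unitDisk, z ≠ 0 → 0 < (1 + z * deriv χ z / χ z).re) (z : ℂ) (hz : z ∈ unitDisk) :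
    0 < (1 + γ) * ((1 + γ) * JJ γ χ z / χ z).re - γ * normSq ((1 + γ) * JJ γ χ z / χ z) := by
  set u : ℂ → ℂ := fun z => (1 + γ) * JJ γ χ z / χ z with hu
  change 0 < (1 + γ) * (u z).re - γ * normSq (u z)
  by_contra hcon
  have hud : DifferentiableOn ℂ u unitDisk :=
    ((JJ_diff γ hγ χ hχ).const_mul _).div hχ hne
  have hu0 : u 0 = 1 := by
    simp only [hu]; rw [JJ_zero γ hγ χ hχ h1, h1, div_one]
  obtain ⟨w, hw, hw0, hE, l, hl, hL⟩ := first_bad u (1 + γ) γ hud (by simp [hu0])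
    ⟨z, hz, not_lt.mp hcon⟩
  have hJ := JJ_deriv γ hγ χ hχ w hw
  have hχd := (hχ.differentiableAt (Metric.isOpen_ball.mem_nhds hw)).hasDerivAt
  have hχw := hne w hw
  have hder : HasDerivAt u _ w := (hJ.const_mul (1 + γ : ℂ)).div hχd hχw
  have hode := JJ_ode γ hγ χ hχ w hw
  have hq' := hq w hw hw0
  set q : ℂ := 1 + w * deriv χ w / χ w with hqdef
  have hlin : w * deriv u w = (1 + γ) - u w * (γ + q) := by
    rw [hder.deriv]
    simp only [hu, hqdef]
    field_simp
    linear_combination (1 + γ : ℂ) * (χ w) * hode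
  set v := u w with hv
  set W := w * deriv u w with hW
  have g1 : (0:ℝ) < 1 + γ := by linarith
  have hL1 := congrArg re hL
  have hL2 := congrArg im hL
  have hW1 := congrArg re hlin
  have hW2 := congrArg im hlin
  simp at hL1 hL2 hW1 hW2
  rw [normSq_apply] at hE
  by_cases hv0 : v = 0
  · rw [hv0] at hL1 hW1
    simp at hL1 hW1
    rw [hW1] at hL1
    nlinarith
  · have hvp : 0 < normSq v := normSq_pos.mpr hv0
    rw [normSq_apply] at hvp
    -- Re (W * conj v) = - q.re * |v|^2
    have k1 : W.re * v.re + W.im * v.im = - q.re * (v.re * v.re + v.im * v.im) := by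
      rw [hW1, hW2]; linear_combination hE
    -- (1+γ)^2 Re (W conj v) = l * (-γ |v|^2)
    have k2 : (1 + γ)^2 * (W.re * v.re + W.im * v.im) = l * (-γ * (v.re * v.re + v.im * v.im)) := by
      linear_combination (4 * γ * (W.re * v.re + W.im * v.im) + l) * hE +
        (v.re * (1 + γ - 2 * γ * v.re) - v.im * (2 * γ * v.im)) * hL1 +
        (v.re * (2 * γ * v.im) + v.im * (1 + γ - 2 * γ * v.re)) * hL2
    have k3 : 0 ≤ l * (-γ * (v.re * v.re + v.im * v.im)) := by
      have : 0 ≤ γ * (v.re * v.re + v.im * v.im) := by positivity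
      nlinarith
    rw [← k2, k1] at k3
    have : 0 < (1+γ)^2 * (q.re * (v.re * v.re + v.im * v.im)) := by positivity
    linarith

lemma core2 (γ : ℝ) (hγ : 0 ≤ γ) (χ φ : ℂ → ℂ) (hχ : DifferentiableOn ℂ χ unitDisk)
    (hφ : DifferentiableOn ℂ φ unitDisk) (h1 : χ 0 = 1) (h2 : φ 0 = 1)
    (hne : ∀ z ∈ unitDisk, χ z ≠ 0)
    (hu : ∀ z ∈ unitDisk, 0 < (JJ γ χ z / χ z).re)
    (hp : ∀ z ∈ unitDisk, z ≠ 0 → 0 < ((φ z + z * deriv φ z) / χ z).re) (z : ℂ) (hz : z ∈ unitDisk) :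
    0 < ((φ z - γ * JJ γ φ z) / JJ γ χ z).re := by
  set p : ℂ → ℂ := fun z => (φ z - γ * JJ γ φ z) / JJ γ χ z with hpdef
  change 0 < (p z).re
  by_contra hcon
  have hJne : ∀ z ∈ unitDisk, JJ γ χ z ≠ 0 := by
    intro z hz h; have := hu z hz; simp [h] at this
  have g1 : (0:ℝ) < 1 + γ := by linarith
  have g1c : (1 + γ : ℂ) ≠ 0 := by exact_mod_cast g1.ne'
  have hpd : DifferentiableOn ℂ p unitDisk :=
    (hφ.sub ((JJ_diff γ hγ φ hφ).const_mul _)).div (JJ_diff γ hγ χ hχ) hJne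
  have hp0 : p 0 = 1 := by
    have e1 := JJ_zero γ hγ χ hχ h1
    have e2 := JJ_zero γ hγ φ hφ h2
    simp only [hpdef]
    rw [div_eq_one_iff_eq (hJne 0 zero_mem_disk), h2]
    apply mul_left_cancel₀ g1c
    linear_combination (-γ : ℂ) * e2 - e1
  obtain ⟨w, hw, hw0, hE, l, hl, hL⟩ := first_bad p 1 0 hpd (by simp [hp0])
    ⟨z, hz, by simpa using hcon⟩
  have hJφ := JJ_deriv γ hγ φ hφ w hw
  have hJχ := JJ_deriv γ hγ χ hχ w hw
  have hφd := (hφ.differentiableAt (Metric.isOpen_ball.mem_nhds hw)).hasDerivAt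
  have hder : HasDerivAt p _ w := (hφd.sub (hJφ.const_mul (γ : ℂ))).div hJχ (hJne w hw)
  have o1 := JJ_ode γ hγ φ hφ w hw
  have o2 := JJ_ode γ hγ χ hχ w hw
  have hJw := hJne w hw
  have hχw := hne w hw
  simp at hE hL
  have hlin : (φ w + w * deriv φ w) / χ w = p w + (w * deriv p w) * (JJ γ χ w / χ w) := by
    rw [hder.deriv]
    simp only [hpdef, Pi.sub_apply]
    field_simp
    linear_combination (γ:ℂ) * JJ γ χ w * o1 + (φ w - γ * JJ γ φ w) * o2
  have := hp w hw hw0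
  rw [hlin, hL] at this
  simp [hE] at this
  have := hu w hw
  nlinarith

lemma F_eq (γ : ℝ) (φ f : ℂ → ℂ) (hf : ∀ z, f z = z * φ z) :
    (fun z : ℂ => if z = 0 then (0:ℂ) else
      ((1 + γ : ℂ) / z ^ (γ : ℂ)) *
        (z * ∫ s in (0:ℝ)..1, ((s : ℂ) * z) ^ ((γ : ℂ) - 1) * f ((s : ℂ) * z))) =
    fun z => z * ((1 + γ) * JJ γ φ z) := by
  funext z
  by_cases hz : z = 0
  · simp [hz]
  simp only [hz, if_false]
  have hint : (∫ s in (0:ℝ)..1, ((s : ℂ) * z) ^ ((γ : ℂ) - 1) * f ((s : ℂ) * z)) =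
      ∫ s in (0:ℝ)..1, z ^ (γ : ℂ) * (((s ^ γ : ℝ) : ℂ) * φ (s * z)) := by
    apply intervalIntegral.integral_congr_ae
    refine Filter.Eventually.of_forall ?_
    intro s hs
    rw [Set.uIoc_of_le zero_le_one] at hs
    have hs0 : (s:ℂ) ≠ 0 := by exact_mod_cast hs.1.ne'
    have e1 : ((s : ℂ) * z) ^ ((γ : ℂ) - 1) = (s:ℂ) ^ ((γ : ℂ) - 1) * z ^ ((γ : ℂ) - 1) := by
      rw [cpow_def_of_ne_zero (mul_ne_zero hs0 hz), cpow_def_of_ne_zero hs0, cpow_def_of_ne_zero hz,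
        log_ofReal_mul hs.1 hz, ofReal_log hs.1.le, ← Complex.exp_add]
      congr 1
      ring
    rw [e1, cpow_sub _ _ hs0, cpow_sub _ _ hz, hf, cpow_one, cpow_one, ofReal_cpow hs.1.le]
    field_simp
  rw [hint, intervalIntegral.integral_const_mul]
  change _ / _ * (z * (_ * JJ γ φ z)) = _
  have : z ^ (γ : ℂ) ≠ 0 := by simp [cpow_eq_zero_iff, hz]
  field_simp

lemma F_props (γ : ℝ) (hγ : 0 ≤ γ) (φ : ℂ → ℂ) (hφ : DifferentiableOn ℂ φ unitDisk) (h : φ 0 = 1) :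
    DifferentiableOn ℂ (fun z => z * ((1 + γ) * JJ γ φ z)) unitDisk ∧
    deriv (fun z => z * ((1 + γ) * JJ γ φ z)) 0 = 1 ∧
    ∀ z ∈ unitDisk, deriv (fun z => z * ((1 + γ) * JJ γ φ z)) z = (1 + γ) * (φ z - γ * JJ γ φ z) := by
  have h3 : ∀ z ∈ unitDisk, HasDerivAt (fun z => z * ((1 + γ) * JJ γ φ z))
      ((1 + γ) * (φ z - γ * JJ γ φ z)) z := by
    intro z hz
    have := (hasDerivAt_id z).mul ((JJ_deriv γ hγ φ hφ z hz).const_mul (1 + γ : ℂ))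
    refine HasDerivAt.congr_deriv this ?_
    simp only [id]
    linear_combination (1 + γ : ℂ) * JJ_ode γ hγ φ hφ z hz
  refine ⟨fun z hz => (h3 z hz).differentiableAt.differentiableWithinAt, ?_,
    fun z hz => (h3 z hz).deriv⟩
  rw [(h3 0 zero_mem_disk).deriv, h]
  linear_combination (-γ : ℂ) * JJ_zero γ hγ φ hφ h

theorem stmt3 (γ : ℝ) (hγ : 0 ≤ γ) (f : ℂ → ℂ) (hf : CloseToConvex f) :
    CloseToConvex (fun z => if z = 0 then 0 else
      ((1 + γ : ℂ) / z ^ (γ : ℂ)) *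
        (z * ∫ s in (0:ℝ)..1, ((s : ℂ) * z) ^ ((γ : ℂ) - 1) * f ((s : ℂ) * z))) := by
  obtain ⟨hfa, ⟨hf0, hf1⟩, g, hga, ⟨hg0, hg1⟩, -, hgs, hfg⟩ := hf
  obtain ⟨φ, hφ, hφ0, hφe, hφd⟩ := factor f hfa.differentiableOn hf0 hf1
  obtain ⟨χ, hχ, hχ0, hχe, hχd⟩ := factor g hga.differentiableOn hg0 hg1
  rw [F_eq γ φ f hφe]
  have hne : ∀ z ∈ unitDisk, χ z ≠ 0 := by
    intro z hz h
    by_cases hz0 : z = 0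
    · subst hz0; simp [hχ0] at h
    · have := hgs z hz hz0
      simp [hχe, h] at this
  have g1 : (0:ℝ) < 1 + γ := by linarith
  have g1c : (1 + γ : ℂ) ≠ 0 := by exact_mod_cast g1.ne'
  have hq : ∀ z ∈ unitDisk, z ≠ 0 → 0 < (1 + z * deriv χ z / χ z).re := by
    intro z hz hz0
    have h := hgs z hz hz0
    have h1 := hne z hz
    rw [hχd z hz, hχe z] at h
    convert h using 2
    field_simp
  have hE := core1 γ hγ χ hχ hχ0 hne hq
  have hu : ∀ z ∈ unitDisk, 0 < (JJ γ χ z / χ z).re := by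
    intro z hz
    have h := hE z hz
    have e : (1 + γ : ℂ) * JJ γ χ z / χ z = ((1 + γ : ℝ) : ℂ) * (JJ γ χ z / χ z) := by
      push_cast; ring
    rw [e, re_ofReal_mul] at h
    have h2 := mul_nonneg hγ (normSq_nonneg (((1 + γ : ℝ) : ℂ) * (JJ γ χ z / χ z)))
    have h3 : 0 < (1 + γ) * ((1 + γ) * (JJ γ χ z / χ z).re) := by linarith
    exact (pos_iff_pos_of_mul_pos ((pos_iff_pos_of_mul_pos h3).1 g1)).1 g1
  have hJne : ∀ z ∈ unitDisk, JJ γ χ z ≠ 0 := by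
    intro z hz h; have := hu z hz; simp [h] at this
  have hp : ∀ z ∈ unitDisk, z ≠ 0 → 0 < ((φ z + z * deriv φ z) / χ z).re := by
    intro z hz hz0
    have h := hfg z hz hz0
    rw [hφd z hz, hχe z, mul_div_mul_left _ _ hz0] at h
    exact h
  have hP := core2 γ hγ χ φ hχ hφ hχ0 hφ0 hne hu hp
  obtain ⟨hF1, hF2, hF3⟩ := F_props γ hγ φ hφ hφ0
  obtain ⟨hG1, hG2, hG3⟩ := F_props γ hγ χ hχ hχ0
  have hstar : ∀ z ∈ unitDisk, z ≠ 0 → 0 < (z * deriv (fun z => z * ((1 + γ) * JJ γ χ z)) z /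
      (z * ((1 + γ) * JJ γ χ z))).re := by
    intro z hz hz0
    rw [hG3 z hz]
    have hJ := hJne z hz
    have hχz := hne z hz
    have h := hE z hz
    set u := (1 + γ : ℂ) * JJ γ χ z / χ z with hudef
    have hu0 : u ≠ 0 := by
      rw [hudef]; exact div_ne_zero (mul_ne_zero g1c hJ) hχz
    have e : z * ((1 + γ) * (χ z - γ * JJ γ χ z)) / (z * ((1 + γ) * JJ γ χ z)) =
        ((1 + γ : ℝ) : ℂ) * u⁻¹ - (γ : ℝ) := by
      rw [hudef]; push_cast; field_simp
    rw [e, sub_re, re_ofReal_mul, inv_re, ofReal_re]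
    have hn := normSq_pos.mpr hu0
    have : (1 + γ) * (u.re / normSq u) - γ = ((1 + γ) * u.re - γ * normSq u) / normSq u := by
      field_simp
    rw [this]
    positivity
  refine ⟨(hF1.analyticOnNhd Metric.isOpen_ball).analyticOn, ⟨by simp, hF2⟩,
    fun z => z * ((1 + γ) * JJ γ χ z), (hG1.analyticOnNhd Metric.isOpen_ball).analyticOn,
    ⟨by simp, hG2⟩, starlike_inj _ hG1 (by simp) hG2 hstar, hstar, ?_⟩
  intro z hz hz0
  have h := hP z hz
  rw [hF3 z hz]
  convert h using 2
  have hJ := hJne z hz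
  field_simp
end
end

section
/- Let 0 < λ ≤ 1 and suppose F is a normalized close-to-convex function on U. Then the function f defined by f(z) = (1/λ) z^{1 - 1/λ} ∫_0^z t^{1/λ - 2} F(t) dt is close-to-convex on U; equivalently, if (1-λ) f(z) + λ z f'(z) is close-to-convex, then so is f. -/
open Complex MeasureTheory

noncomputable section

open Filter Topology in
lemma aux_first (φ : ℂ → ℝ) (d : ℂ → ℂ) (hc : ContinuousOn φ (Metric.ball 0 1))
    (hd : ∀ z ∈ Metric.ball (0:ℂ) 1, ∀ w : ℂ,
      HasDerivAt (fun t : ℝ => φ (z + t * w)) ((d z * w).re) 0)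
    (h0 : 0 < φ 0)
    (hno : ∀ z ∈ Metric.ball (0:ℂ) 1, z ≠ 0 → φ z = 0 → (d z * z).re ≤ 0 → (d z * z).im = 0 → False) :
    ∀ z ∈ Metric.ball (0:ℂ) 1, 0 < φ z := by
  by_contra! hcon
  obtain ⟨z1, hz1, hφ1⟩ := hcon
  have hz1n : ‖z1‖ < 1 := by simpa using hz1
  have hsub : Metric.closedBall (0:ℂ) ‖z1‖ ⊆ Metric.ball 0 1 :=
    Metric.closedBall_subset_ball hz1n
  have hK : IsCompact (Metric.closedBall (0:ℂ) ‖z1‖ ∩ φ ⁻¹' Set.Iic 0) := by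
    refine (isCompact_closedBall (0:ℂ) ‖z1‖).of_isClosed_subset ?_ Set.inter_subset_left
    exact (hc.mono hsub).preimage_isClosed_of_isClosed Metric.isClosed_closedBall isClosed_Iic
  obtain ⟨z, ⟨hzb, hzφ⟩, hmin⟩ := hK.exists_isMinOn (f := fun z => ‖z‖)
    ⟨z1, by simp, hφ1⟩ continuous_norm.continuousOn
  have hzU := hsub hzb
  have hzle : ‖z‖ ≤ ‖z1‖ := by simpa using hzb
  have hzφ' : φ z ≤ 0 := hzφ
  have hz0 : z ≠ 0 := by rintro rfl; linarith
  have hznorm : 0 < ‖z‖ := norm_pos_iff.2 hz0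
  have hpos : ∀ w : ℂ, ‖w‖ < ‖z‖ → 0 < φ w := by
    intro w hw
    by_contra! h
    have : ‖z‖ ≤ ‖w‖ := hmin (show w ∈ _ from ⟨by simpa using (hw.le.trans hzle), h⟩)
    linarith
  have hdir : ∀ ζ : ℂ, ζ.re < 0 → ∀ᶠ t : ℝ in 𝓝[>] 0, 0 < φ (z + t * (z * ζ)) := by
    intro ζ hζ
    have hN : 0 < Complex.normSq ζ := Complex.normSq_pos.2 (by rintro rfl; simp at hζ)
    have : Set.Ioo (0:ℝ) (-2 * ζ.re / Complex.normSq ζ) ∈ 𝓝[>] (0:ℝ) :=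
      Ioo_mem_nhdsGT (by apply div_pos _ hN; linarith)
    filter_upwards [this] with t ht
    apply hpos
    have h1 : z + t * (z * ζ) = z * (1 + t * ζ) := by ring
    rw [h1, norm_mul]
    have h2 : ‖(1 + t * ζ : ℂ)‖ < 1 := by
      have h3 := ht.2
      rw [lt_div_iff₀ hN] at h3
      have : ‖(1 + t * ζ : ℂ)‖ ^ 2 < 1 := by
        rw [← Complex.normSq_eq_norm_sq]
        rw [Complex.normSq_apply] at h3 ⊢
        simp
        nlinarith [ht.1]
      nlinarith [norm_nonneg (1 + t * ζ : ℂ)]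
    nlinarith
  have hge : ∀ ζ : ℂ, ζ.re < 0 → 0 ≤ (d z * (z * ζ)).re := by
    intro ζ hζ
    have h := (hd z hzU (z * ζ)).hasDerivWithinAt (s := Set.Ioi 0)
    rw [hasDerivWithinAt_iff_tendsto_slope' (by simp)] at h
    refine ge_of_tendsto h ?_
    filter_upwards [hdir ζ hζ, self_mem_nhdsWithin] with t ht ht0
    rw [slope_def_field]
    have ht0 : 0 < t := ht0
    apply div_nonneg _ (by linarith)
    simp only [Complex.ofReal_zero, zero_mul, add_zero]
    linarith
  have hz_eq : φ z = 0 := by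
    apply le_antisymm hzφ'
    have h := ((hd z hzU (z * (-1))).continuousAt.tendsto).mono_left
      (nhdsWithin_le_nhds (s := Set.Ioi (0:ℝ)))
    simp only [Complex.ofReal_zero, zero_mul, add_zero] at h
    refine ge_of_tendsto h ?_
    filter_upwards [hdir (-1) (by simp)] with t ht using ht.le
  have hexp : ∀ ζ : ℂ, (d z * (z * ζ)).re = (d z * z).re * ζ.re - (d z * z).im * ζ.im := by
    intro ζ; rw [← mul_assoc, Complex.mul_re]
  have hre : (d z * z).re ≤ 0 := by
    have := hge (-1) (by simp)
    rw [hexp] at this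
    simp at this
    simpa using this
  refine hno z hzU hz0 hz_eq hre ?_
  set A := (d z * z).re
  set B := (d z * z).im
  have key : ∀ s : ℝ, 0 ≤ -A - B * s := by
    intro s
    have := hge (⟨-1, s⟩) (by simp)
    rw [hexp] at this
    simp at this
    linarith
  by_contra hB
  have := key ((-A + 1) / B)
  rw [mul_div_cancel₀ _ hB] at this
  linarith

lemma aux_dir (p : ℂ → ℂ) (z w p' : ℂ) (hp : HasDerivAt p p' z) :
    HasDerivAt (fun t : ℝ => p (z + t * w)) (p' * w) 0 := by
  have h1 : HasDerivAt (fun t : ℂ => z + t * w) w 0 := by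
    simpa using ((hasDerivAt_id (0:ℂ)).mul_const w).const_add z
  have h2 : HasDerivAt (fun t : ℂ => p (z + t * w)) (p' * w) 0 := by
    refine HasDerivAt.comp (0:ℂ) (h₂ := p) (h := fun t : ℂ => z + t * w) ?_ h1
    simpa using hp
  have := HasDerivAt.comp_ofReal (z := (0:ℝ)) (e := fun t : ℂ => p (z + t * w)) (by simpa using h2)
  exact this

lemma aux_re {q : ℝ → ℂ} {q' : ℂ} {t : ℝ} (h : HasDerivAt q q' t) :
    HasDerivAt (fun t => (q t).re) q'.re t := by
  exact (Complex.reCLM.hasFDerivAt.comp_hasDerivAt t h)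

lemma aux_im {q : ℝ → ℂ} {q' : ℂ} {t : ℝ} (h : HasDerivAt q q' t) :
    HasDerivAt (fun t => (q t).im) q'.im t := by
  exact (Complex.imCLM.hasFDerivAt.comp_hasDerivAt t h)

lemma aux_hd {p : ℂ → ℂ} (hp : DifferentiableOn ℂ p (Metric.ball 0 1)) {z : ℂ}
    (hz : z ∈ Metric.ball (0:ℂ) 1) : HasDerivAt p (deriv p z) z :=
  (hp.differentiableAt (Metric.isOpen_ball.mem_nhds hz)).hasDerivAt

/-- positivity of the real part -/
lemma aux_pos (p v : ℂ → ℂ) (l : ℝ) (h0 : 0 < l) (hp : DifferentiableOn ℂ p (Metric.ball 0 1))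
    (hp0 : p 0 = 1) (hv : ∀ z ∈ Metric.ball (0:ℂ) 1, 0 < (v z).re)
    (hH : ∀ z ∈ Metric.ball (0:ℂ) 1, z ≠ 0 → 0 < (p z + l * v z * (deriv p z * z)).re) :
    ∀ z ∈ Metric.ball (0:ℂ) 1, 0 < (p z).re := by
  refine aux_first (fun z => (p z).re) (deriv p) ?_ ?_ (by simp [hp0]) ?_
  · exact Complex.continuous_re.comp_continuousOn hp.continuousOn
  · intro z hz w
    exact aux_re (aux_dir p z w _ (aux_hd hp hz))
  · intro z hz hz0 h1 h2 h3
    have := hH z hz hz0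
    rw [Complex.add_re, Complex.mul_re, h3, h1, Complex.re_ofReal_mul] at this
    have := mul_pos h0 (hv z hz)
    nlinarith

lemma aux_alg (V D Q : ℂ) (l : ℝ) (h0 : 0 < l) (hl : l ≤ 1) (hp : 0 < Q.re)
    (he : (1 - (l:ℂ)) * V + l * D + l * V * Q = 1)
    (h1 : V.re - (1 - l) * (V.re * V.re + V.im * V.im) = 0)
    (h2 : (D * (1 - 2 * (1 - (l:ℂ)) * (starRingEnd ℂ) V)).re ≤ 0)
    (h3 : (D * (1 - 2 * (1 - (l:ℂ)) * (starRingEnd ℂ) V)).im = 0) : False := by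
  have her := congrArg Complex.re he
  have hei := congrArg Complex.im he
  obtain ⟨x, y⟩ := V
  obtain ⟨m, n⟩ := D
  obtain ⟨c, e⟩ := Q
  simp at her hei h1 h2 h3 hp
  have key : l * ((m * (1 - 2 * (1 - l) * x) - n * (2 * (1 - l) * y)) * x)
      = l * ((x * x + y * y) * c) := by
    linear_combination (2 * m * l - 1) * h1 - x * her - y * hei + l * y * h3
  have key2 := mul_left_cancel₀ h0.ne' key
  have hx : 0 ≤ x := by
    have : 0 ≤ (1 - l) * (x * x + y * y) :=
      mul_nonneg (by linarith) (by nlinarith [mul_self_nonneg x, mul_self_nonneg y])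
    linarith
  have h4 : (x * x + y * y) * c ≤ 0 := by
    rw [← key2]; exact mul_nonpos_of_nonpos_of_nonneg (by linarith) hx
  have h5 : x * x + y * y ≤ 0 := by
    by_contra! h; nlinarith [mul_pos h hp]
  have hx0 : x = 0 := by nlinarith [mul_self_nonneg x, mul_self_nonneg y]
  have hy0 : y = 0 := by nlinarith [mul_self_nonneg x, mul_self_nonneg y]
  subst hx0 hy0
  simp at her h2
  nlinarith

lemma aux_star (v P : ℂ → ℂ) (l : ℝ) (h0 : 0 < l) (hl : l ≤ 1)
    (hv : DifferentiableOn ℂ v (Metric.ball 0 1))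
    (hv0 : v 0 = 1) (hP : ∀ z ∈ Metric.ball (0:ℂ) 1, z ≠ 0 → 0 < (P z).re)
    (hH : ∀ z ∈ Metric.ball (0:ℂ) 1, z ≠ 0 →
      (1 - l) * v z + l * (deriv v z * z) + l * v z * P z = 1) :
    ∀ z ∈ Metric.ball (0:ℂ) 1, (1 - l) * ((v z).re ^ 2 + (v z).im ^ 2) < (v z).re := by
  suffices h : ∀ z ∈ Metric.ball (0:ℂ) 1,
      0 < (v z).re - (1 - l) * ((v z).re * (v z).re + (v z).im * (v z).im) by
    intro z hz; have := h z hz; nlinarith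
  refine aux_first (fun z => (v z).re - (1 - l) * ((v z).re * (v z).re + (v z).im * (v z).im))
    (fun z => deriv v z * (1 - 2 * (1 - l) * (starRingEnd ℂ) (v z))) ?_ ?_ (by simp [hv0, h0]) ?_
  · have h1 := Complex.continuous_re.comp_continuousOn hv.continuousOn
    have h2 := Complex.continuous_im.comp_continuousOn hv.continuousOn
    exact h1.sub (continuousOn_const.mul ((h1.mul h1).add (h2.mul h2)))
  · intro z hz w
    have h := aux_dir v z w _ (aux_hd hv hz)
    have h1 := aux_re h
    have h2 := aux_im h
    have := h1.sub (((h1.mul h1).add (h2.mul h2)).const_mul (1 - l))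
    refine HasDerivAt.congr_deriv this ?_
    simp
    ring
  · intro z hz hz0 h1 h2 h3
    have hp := hP z hz hz0
    have he := hH z hz hz0
    have hX : deriv v z * (1 - 2 * (1 - (l:ℂ)) * (starRingEnd ℂ) (v z)) * z
      = (deriv v z * z) * (1 - 2 * (1 - (l:ℂ)) * (starRingEnd ℂ) (v z)) := by ring
    simp only [hX] at h2 h3
    generalize deriv v z * z = D at *
    generalize v z = V at *
    generalize P z = Q at *
    exact aux_alg V D Q l h0 hl hp he h1 h2 h3

/-- solving `G + l z G' = g` -/
lemma aux_solve (g : ℂ → ℂ) (l : ℝ) (h0 : 0 < l) (hg : DifferentiableOn ℂ g (Metric.ball 0 1)) :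
    ∃ G : ℂ → ℂ, DifferentiableOn ℂ G (Metric.ball 0 1) ∧
      ∀ z ∈ Metric.ball (0:ℂ) 1, G z + l * z * deriv G z = g z := by
  set c : ℕ → ℂ := fun n => (n.factorial : ℂ)⁻¹ * iteratedDeriv n g 0 with hc
  have hs : ∀ z ∈ Metric.ball (0:ℂ) 1, HasSum (fun n => c n * z ^ n) (g z) := by
    intro z hz
    have := Complex.hasSum_taylorSeries_on_ball hg hz
    refine (funext fun n => ?_ : (fun n => c n * z ^ n) = _) ▸ this
    simp only [hc, smul_eq_mul, sub_zero]; ring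
  have hne : ∀ n : ℕ, (1 + l * n : ℂ) ≠ 0 := by
    intro n h
    have h2 : (0:ℝ) < 1 + l * n := by positivity
    have : ((1 + l * n : ℝ) : ℂ) = 0 := by push_cast; exact h
    exact h2.ne' (by exact_mod_cast this)
  have hn1 : ∀ n : ℕ, 1 ≤ ‖(1 + l * n : ℂ)‖ := by
    intro n
    have h2 : (0:ℝ) ≤ l * n := by positivity
    have : (1 + l * n : ℂ) = ((1 + l * n : ℝ) : ℂ) := by push_cast; rfl
    rw [this, Complex.norm_real, Real.norm_of_nonneg (by linarith)]
    linarith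
  set T : ℕ → ℂ → ℂ := fun n w => c n / (1 + l * n) * w ^ n with hT
  have hTd : ∀ n z, HasDerivAt (T n) (c n / (1 + l * n) * (n * z ^ (n - 1))) z := by
    intro n z
    exact (hasDerivAt_pow n z).const_mul _
  have main : ∀ z ∈ Metric.ball (0:ℂ) 1, DifferentiableAt ℂ (fun w => ∑' n, T n w) z ∧
      (∑' n, T n z) + l * z * deriv (fun w => ∑' n, T n w) z = g z := by
    intro z hz
    have hz1 : ‖z‖ < 1 := by simpa using hz
    obtain ⟨r, hr, hr1⟩ := exists_between hz1
    have hr0 : 0 < r := (norm_nonneg z).trans_lt hr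
    have hu : Summable (fun n => ‖c n‖ * r ^ n) := by
      have := (hs (r:ℂ) (by simpa [abs_of_pos hr0] using hr1)).summable.norm
      simpa [abs_of_pos hr0] using this
    have hle : ∀ (n : ℕ) (w : ℂ), w ∈ Metric.ball (0:ℂ) r → ‖T n w‖ ≤ ‖c n‖ * r ^ n := by
      intro n w hw
      have hw : ‖w‖ ≤ r := by simpa using (Metric.ball_subset_closedBall hw)
      simp only [hT, norm_mul, norm_div, norm_pow]
      have := hn1 n
      gcongr
      exact div_le_self (norm_nonneg _) this
    have hzr : z ∈ Metric.ball (0:ℂ) r := by simpa using hr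
    have hdiff : ∀ n, DifferentiableOn ℂ (T n) (Metric.ball 0 r) :=
      fun n w _ => (hTd n w).differentiableAt.differentiableWithinAt
    have hD := Complex.differentiableOn_tsum_of_summable_norm hu hdiff Metric.isOpen_ball hle
    have hS := Complex.hasSum_deriv_of_summable_norm hu hdiff Metric.isOpen_ball hle hzr
    refine ⟨hD.differentiableAt (Metric.isOpen_ball.mem_nhds hzr), ?_⟩
    have hsum : Summable (fun n => T n z) :=
      Summable.of_norm_bounded hu (fun n => hle n z hzr)
    have h1 := hsum.hasSum.add (hS.mul_left (l * z))
    refine h1.unique ?_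
    convert hs z hz using 2 with n
    rw [(hTd n z).deriv]
    simp only [hT]
    rcases n with _ | n
    · simp
    · have := hne (n+1)
      simp only [Nat.add_sub_cancel]
      field_simp
      ring
  exact ⟨fun w => ∑' n, T n w, fun z hz => (main z hz).1.differentiableWithinAt,
    fun z hz => (main z hz).2⟩

/-- starlike implies univalent -/
lemma aux_inj (G : ℂ → ℂ) (hG : DifferentiableOn ℂ G (Metric.ball 0 1))
    (hne : ∀ z ∈ Metric.ball (0:ℂ) 1, G z ≠ 0)
    (hre : ∀ z ∈ Metric.ball (0:ℂ) 1, z ≠ 0 → 0 < (1 + z * (deriv G z / G z)).re) :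
    Set.InjOn (fun z => z * G z) (Metric.ball 0 1) := by
  have hGd : DifferentiableOn ℂ (fun z => deriv G z / G z) (Metric.ball 0 1) :=
    (hG.deriv Metric.isOpen_ball).div hG hne
  obtain ⟨h, hh⟩ := hGd.isExactOn_ball
  have hconst : ∃ K : ℂ, ∀ z ∈ Metric.ball (0:ℂ) 1, G z * Complex.exp (- h z) = K := by
    have hd : ∀ z ∈ Metric.ball (0:ℂ) 1,
        HasDerivAt (fun z => G z * Complex.exp (- h z)) 0 z := by
      intro z hz
      have := (aux_hd hG hz).mul (hh z hz).neg.cexp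
      refine HasDerivAt.congr_deriv this ?_
      have := hne z hz
      simp only
      field_simp
      ring
    refine ⟨G 0 * Complex.exp (- h 0), fun z hz => ?_⟩
    exact Metric.isOpen_ball.is_const_of_deriv_eq_zero
      (convex_ball (0:ℂ) 1).isPreconnected
      (fun z hz => (hd z hz).differentiableAt.differentiableWithinAt)
      (fun z hz => (hd z hz).deriv) hz (by simp)
  obtain ⟨K, hK⟩ := hconst
  have hK0 : K ≠ 0 := by
    rw [← hK 0 (by simp)]
    exact mul_ne_zero (hne 0 (by simp)) (Complex.exp_ne_zero _)
  have hGe : ∀ z ∈ Metric.ball (0:ℂ) 1, G z = K * Complex.exp (h z) := by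
    intro z hz
    rw [← hK z hz, mul_assoc, ← Complex.exp_add]; simp
  have hexpU : ∀ ζ : ℂ, ζ.re < 0 → Complex.exp ζ ∈ Metric.ball (0:ℂ) 1 := by
    intro ζ hζ
    simp [Complex.norm_exp, hζ]
  set q : ℂ → ℂ := fun ζ => ζ + h (Complex.exp ζ) with hq
  have hqd : ∀ ζ : ℂ, ζ.re < 0 → ∃ q', HasDerivAt q q' ζ ∧ 0 < q'.re := by
    intro ζ hζ
    refine ⟨_, (hasDerivAt_id ζ).add
      ((hh _ (hexpU ζ hζ)).comp ζ (Complex.hasDerivAt_exp ζ)), ?_⟩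
    have := hre _ (hexpU ζ hζ) (Complex.exp_ne_zero _)
    rwa [mul_comm (Complex.exp ζ)] at this
  have hqinj : ∀ α β : ℂ, α.re < 0 → β.re < 0 → q α = q β → α = β := by
    intro α β hα hβ hab
    by_contra hne'
    have hseg : ∀ t ∈ Set.Icc (0:ℝ) 1, (α + t * (β - α)).re < 0 := by
      intro t ht
      simp
      rcases eq_or_lt_of_le ht.1 with h | h
      · subst h; simpa using hα
      · nlinarith [ht.2, mul_pos h (neg_pos.2 hβ)]
    choose! q' hq'1 hq'2 using hqd
    set u : ℝ → ℝ := fun t => ((q (α + t * (β - α))) * (starRingEnd ℂ) (β - α)).re with hu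
    have hud : ∀ t ∈ Set.Icc (0:ℝ) 1,
        HasDerivAt u ((q' (α + t * (β - α))).re * Complex.normSq (β - α)) t := by
      intro t ht
      have h1 : HasDerivAt (fun t : ℂ => α + t * (β - α)) (β - α) (t:ℂ) := by
        simpa using ((hasDerivAt_id (t:ℂ)).mul_const (β - α)).const_add α
      have h2 := ((hq'1 _ (hseg t ht)).comp (t:ℂ) h1).comp_ofReal
      have h3 := aux_re (h2.mul_const ((starRingEnd ℂ) (β - α)))
      refine HasDerivAt.congr_deriv h3 ?_
      rw [mul_assoc, Complex.mul_conj, Complex.re_mul_ofReal]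
    obtain ⟨t, ht, hte⟩ := exists_hasDerivAt_eq_slope u _ (zero_lt_one)
      (fun t ht => (hud t ht).continuousAt.continuousWithinAt)
      (fun t ht => hud t ⟨ht.1.le, ht.2.le⟩)
    have hpos : 0 < (q' (α + t * (β - α))).re * Complex.normSq (β - α) :=
      mul_pos (hq'2 _ (hseg t ⟨ht.1.le, ht.2.le⟩))
        (Complex.normSq_pos.2 (sub_ne_zero.2 (Ne.symm hne')))
    rw [hte] at hpos
    simp [hu, hab] at hpos
  intro a ha b hb hab
  simp only at hab
  by_cases ha0 : a = 0
  · subst ha0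
    rw [zero_mul] at hab
    rcases mul_eq_zero.1 hab.symm with h | h
    · exact h.symm
    · exact absurd h (hne b hb)
  by_cases hb0 : b = 0
  · subst hb0
    rw [zero_mul] at hab
    rcases mul_eq_zero.1 hab with h | h
    · exact h
    · exact absurd h (hne a ha)
  have hla : ∀ a ∈ Metric.ball (0:ℂ) 1, a ≠ 0 → (Complex.log a).re < 0 := by
    intro a ha ha0
    rw [Complex.log_re]
    exact Real.log_neg (norm_pos_iff.2 ha0) (by simpa using ha)
  have hea : ∀ a ∈ Metric.ball (0:ℂ) 1, a ≠ 0 →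
      a * G a = K * Complex.exp (q (Complex.log a)) := by
    intro a ha ha0
    rw [hGe a ha, hq]
    simp only
    rw [Complex.exp_add, Complex.exp_log ha0]
    ring
  rw [hea a ha ha0, hea b hb hb0] at hab
  obtain ⟨n, hn⟩ := Complex.exp_eq_exp_iff_exists_int.1 (mul_left_cancel₀ hK0 hab)
  have hper : Complex.exp (Complex.log b + n * (2 * Real.pi * Complex.I)) = b := by
    rw [Complex.exp_eq_exp_iff_exists_int.2 ⟨n, rfl⟩, Complex.exp_log hb0]
  have h1 : q (Complex.log a) = q (Complex.log b + n * (2 * Real.pi * Complex.I)) := by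
    rw [hn]
    simp only [hq]
    rw [hper, Complex.exp_log hb0]
    ring
  have h2 := hqinj _ _ (hla a ha ha0) (by simpa using hla b hb hb0) h1
  rw [← Complex.exp_log ha0, h2, hper]

lemma aux_main (l : ℝ) (h0 : 0 < l) (hl : l ≤ 1)
    (f F : ℂ → ℂ) (hf : AnalyticOn ℂ f unitDisk) (hfn : Normalized f)
    (hrel : ∀ z ∈ unitDisk, F z = (1 - (l : ℂ)) * f z + (l : ℂ) * z * deriv f z)
    (hF : CloseToConvex F) :
    CloseToConvex f := by
  obtain ⟨hFa, hFn, g, hga, hgn, -, hgs, hFg⟩ := hF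
  refine ⟨hf, hfn, ?_⟩
  unfold Starlike StarlikeOfOrder at *
  unfold unitDisk at *
  have hlc : (l:ℂ) ≠ 0 := by exact_mod_cast h0.ne'
  have hfd : DifferentiableOn ℂ f (Metric.ball 0 1) := hf.differentiableOn
  have hfd' : DifferentiableOn ℂ (deriv f) (Metric.ball 0 1) := hfd.deriv Metric.isOpen_ball
  have hgd : DifferentiableOn ℂ g (Metric.ball 0 1) := hga.differentiableOn
  set g1 : ℂ → ℂ := dslope g 0 with hg1
  have hg1d : DifferentiableOn ℂ g1 (Metric.ball 0 1) :=
    (Complex.differentiableOn_dslope (Metric.ball_mem_nhds 0 one_pos)).2 hgd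
  have hgg : ∀ z, g z = z * g1 z := by
    intro z
    have := sub_smul_dslope g 0 z
    simp [hgn.1] at this
    rw [hg1, this]
  have hg10 : g1 0 = 1 := by rw [hg1, dslope_same, hgn.2]
  have hg1ne : ∀ z ∈ Metric.ball (0:ℂ) 1, g1 z ≠ 0 := by
    intro z hz h
    by_cases hz0 : z = 0
    · subst hz0; rw [hg10] at h; exact one_ne_zero h
    · have := hgs z hz hz0
      rw [hgg z, h] at this
      simp at this
  have hgderiv : ∀ z ∈ Metric.ball (0:ℂ) 1, deriv g z = g1 z + z * deriv g1 z := by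
    intro z hz
    have h1 := (hasDerivAt_id z).mul (aux_hd hg1d hz)
    have h2 : HasDerivAt g (1 * g1 z + id z * deriv g1 z) z := by
      rw [show g = (id * g1) from funext fun z => by simp [← hgg]]
      exact h1
    rw [h2.deriv]; simp
  obtain ⟨G, hGd, hGe⟩ := aux_solve g1 l h0 hg1d
  have hG0 : G 0 = 1 := by
    have := hGe 0 (by simp)
    simpa [hg10] using this
  set v : ℂ → ℂ := fun z => G z / g1 z with hv
  have hvd : DifferentiableOn ℂ v (Metric.ball 0 1) := hGd.div hg1d hg1ne
  have hv0 : v 0 = 1 := by simp [hv, hG0, hg10]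
  have hvstar := aux_star v (fun z => z * deriv g z / g z) l h0 hl hvd hv0 hgs (by
    intro z hz hz0
    have h1 : deriv v z = (deriv G z * g1 z - G z * deriv g1 z) / g1 z ^ 2 :=
      ((aux_hd hGd hz).div (aux_hd hg1d hz) (hg1ne z hz)).deriv
    have h2 := hGe z hz
    have h3 := hg1ne z hz
    have h5 : v z = G z / g1 z := rfl
    simp only [h1, hgderiv z hz, hgg z, h5]
    field_simp
    linear_combination (g1 z) * h2)
  have hvre : ∀ z ∈ Metric.ball (0:ℂ) 1, 0 < (v z).re := by
    intro z hz
    have := hvstar z hz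
    have h2 : 0 ≤ (1 - l) * ((v z).re ^ 2 + (v z).im ^ 2) :=
      mul_nonneg (by linarith) (by positivity)
    linarith
  have hGne : ∀ z ∈ Metric.ball (0:ℂ) 1, G z ≠ 0 := by
    intro z hz h
    have := hvre z hz
    simp [hv, h] at this
  have hGstar : ∀ z ∈ Metric.ball (0:ℂ) 1, 0 < (1 + z * (deriv G z / G z)).re := by
    intro z hz
    have h1 : 1 + z * (deriv G z / G z) = ((1 / l : ℝ) : ℂ) * ((v z)⁻¹ - ((1 - l : ℝ) : ℂ)) := by
      have h2 := hGe z hz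
      have h3 := hg1ne z hz
      have h4 := hGne z hz
      simp only [hv]
      push_cast
      field_simp
      linear_combination h2
    rw [h1, Complex.re_ofReal_mul]
    apply mul_pos (by positivity)
    rw [Complex.sub_re, Complex.ofReal_re, Complex.inv_re, sub_pos]
    have hvne : v z ≠ 0 := fun h => by have := hvre z hz; simp [h] at this
    rw [lt_div_iff₀ (Complex.normSq_pos.2 hvne), Complex.normSq_apply]
    have := hvstar z hz
    nlinarith
  have hHd : ∀ z ∈ Metric.ball (0:ℂ) 1,
      HasDerivAt (fun z => z * G z) (G z + z * deriv G z) z := by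
    intro z hz
    have h1 := (hasDerivAt_id z).mul (aux_hd hGd hz)
    refine HasDerivAt.congr_deriv h1 ?_
    simp
  refine ⟨fun z => z * G z, ?_, ⟨by simp, ?_⟩, ?_, ?_, ?_⟩
  · exact (DifferentiableOn.analyticOnNhd
      (fun z hz => (hHd z hz).differentiableAt.differentiableWithinAt) Metric.isOpen_ball).analyticOn
  · rw [(hHd 0 (by simp)).deriv]; simp [hG0]
  · exact aux_inj G hGd hGne (fun z hz _ => hGstar z hz)
  · intro z hz hz0
    rw [(hHd z hz).deriv]
    have h4 := hGne z hz
    have : z * (G z + z * deriv G z) / (z * G z) = 1 + z * (deriv G z / G z) := by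
      field_simp
    rw [this]
    exact hGstar z hz
  · have hp := aux_pos (fun z => deriv f z / G z) v l h0 (hfd'.div hGd hGne)
      (by simp [hG0, hfn.2]) hvre (by
      intro z hz hz0
      have h1 : deriv (fun z => deriv f z / G z) z
          = (deriv (deriv f) z * G z - deriv f z * deriv G z) / G z ^ 2 :=
        ((aux_hd hfd' hz).div (aux_hd hGd hz) (hGne z hz)).deriv
      have hFd : deriv F z = deriv f z + l * z * deriv (deriv f) z := by
        have he : F =ᶠ[nhds z] fun z => (1 - (l : ℂ)) * f z + (l : ℂ) * z * deriv f z := by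
          filter_upwards [Metric.isOpen_ball.mem_nhds hz] with w hw using hrel w hw
        rw [he.deriv_eq]
        have h2 := ((aux_hd hfd hz).const_mul (1 - (l:ℂ))).add
          (((hasDerivAt_id z).const_mul (l:ℂ)).mul (aux_hd hfd' hz))
        refine (HasDerivAt.congr_deriv h2 ?_).deriv
        simp
        ring
      have h2 := hGe z hz
      have h3 := hg1ne z hz
      have h4 := hGne z hz
      have := hFg z hz hz0
      rw [hFd, hgg z] at this
      convert this using 2
      simp only [h1, hv]
      field_simp
      linear_combination (-deriv f z) * h2)
    intro z hz hz0
    have := hp z hz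
    simp only at this ⊢
    rwa [mul_div_mul_left _ _ hz0]

theorem stmt12 (l : ℝ) (h0 : 0 < l) (hl : l ≤ 1)
    (f F : ℂ → ℂ) (hf : AnalyticOn ℂ f unitDisk) (hfn : Normalized f)
    (hrel : ∀ z ∈ unitDisk, F z = (1 - (l : ℂ)) * f z + (l : ℂ) * z * deriv f z)
    (hF : CloseToConvex F) :
    CloseToConvex f := 
  aux_main l h0 hl f F hf hfn hrel hF
end
end
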